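/- Let n ≥ 5, p ≥ 1 and 1 < s < n/(n−4). Let U = (u_1, …, u_p) be a nonnegative superharmonic C⁴ solution of Δ² u_i = |U|^{s−1} u_i on the punctured unit ball B₁ \ {0} ⊂ ℝ^n. If |U(x)| = o(|x|^{4−n}) as x → 0 (i.e., lim_{x→0} |x|^{n−4} |U(x)| = 0), then the origin is a removable singularity: U extends to a continuous function on all of B₁. -/

import Mathlib

open MeasureTheory Metric Filter Topology

/-- The Euclidean Laplacian: sum of second partial derivatives. -/
noncomputable def lap {n : ℕ} (u : EuclideanSpace ℝ (Fin n) → ℝ)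
    (x : EuclideanSpace ℝ (Fin n)) : ℝ :=
  ∑ i : Fin n,
    fderiv ℝ (fun y => fderiv ℝ u y (EuclideanSpace.single i 1)) x
      (EuclideanSpace.single i 1)

/-- The bi-Laplacian Δ² = Δ ∘ Δ. -/
noncomputable def bilap {n : ℕ} (u : EuclideanSpace ℝ (Fin n) → ℝ) :
    EuclideanSpace ℝ (Fin n) → ℝ :=
  lap (lap u)

/-- The pointwise Euclidean norm |U(x)| of a p-map U. -/
noncomputable def vnorm {n p : ℕ} (U : Fin p → EuclideanSpace ℝ (Fin n) → ℝ)
    (x : EuclideanSpace ℝ (Fin n)) : ℝ :=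
  Real.sqrt (∑ i, U i x ^ 2)

/-!
Each component `u` has `Δ² u ≤ |U| ^ s`, so `v = -Δ u` is nonnegative with `-Δ v ≤ |U| ^ s`. An
interior estimate of Bernstein type, applied at `x` on the scale `|x|`, turns `u = o(|x| ^ (4 - n))`
into `v = o(|x| ^ (2 - n))`. A pole weaker than that of the fundamental solution is invisible to the
maximum principle, so `v`, and then `u`, can be compared with a barrier built from a power of `|x|`;
this makes `U` as small as the right-hand side allows. As `s < n / (n - 4)`, each round of the
comparison gains a fixed power of `|x|` until `Δ u` is bounded.

For bounded `Δ u`, the maximum principle is applied on a small ball to the difference of `u` and its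
translate by `e`, whose weak poles at `0` and `-e` are again invisible. The oscillation of `u` at
`0` is thus controlled by the modulus of continuity of `u` on a small sphere, so `u` has a limit.
-/

open Asymptotics InnerProductSpace Laplacian Gradient

section SecondDerivative

variable {E F : Type*} [NormedAddCommGroup E] [InnerProductSpace ℝ E]
  [NormedAddCommGroup F] [NormedSpace ℝ F]

theorem eventually_differentiableAt {u : E → F} {x : E} (hu : ContDiffAt ℝ 2 u x) :
    ∀ᶠ y in 𝓝 x, DifferentiableAt ℝ u y :=
  (hu.eventually (by simp)).mono fun _ h ↦ h.differentiableAt two_ne_zero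

theorem differentiableAt_fderiv {u : E → F} {x : E} (hu : ContDiffAt ℝ 2 u x) :
    DifferentiableAt ℝ (fderiv ℝ u) x :=
  (hu.fderiv_right (m := 1) le_rfl).differentiableAt one_ne_zero

theorem fderiv_fderiv_apply_self_nonpos_of_isLocalMax {f : E → ℝ} {x : E}
    (hmax : IsLocalMax f x) (hf : ContDiffAt ℝ 2 f x) (e : E) :
    fderiv ℝ (fderiv ℝ f) x e e ≤ 0 := by
  let line : ℝ → E := fun t ↦ x + t • e
  have hline (t : ℝ) : HasDerivAt line e t := by
    simpa [line] using ((hasDerivAt_id t).smul_const e).const_add x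
  have hline0 : line 0 = x := by simp [line]
  have hcont : Tendsto line (𝓝 0) (𝓝 x) := by
    simpa only [hline0] using (hline 0).continuousAt.tendsto
  have hd : deriv (f ∘ line) =ᶠ[𝓝 0] fun t ↦ fderiv ℝ f (line t) e := by
    filter_upwards [hcont.eventually (eventually_differentiableAt hf)] with t ht
    exact (ht.hasFDerivAt.comp_hasDerivAt t (hline t)).deriv
  have hdd : deriv (deriv (f ∘ line)) 0 = fderiv ℝ (fderiv ℝ f) x e e := by
    have h2 : HasFDerivAt (fderiv ℝ f) (fderiv ℝ (fderiv ℝ f) x) (line 0) := by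
      rw [hline0]; exact (differentiableAt_fderiv hf).hasFDerivAt
    rw [hd.deriv_eq]
    exact ((h2.comp_hasDerivAt 0 (hline 0)).clm_apply (hasDerivAt_const 0 e)).deriv.trans (by simp)
  have hmax0 : IsLocalMax (f ∘ line) 0 := by
    simpa only [IsLocalMax, IsMaxFilter, Function.comp_apply, hline0] using hcont.eventually hmax
  by_contra! hpos
  have hmin : IsLocalMin (f ∘ line) 0 := by
    refine isLocalMin_of_deriv_deriv_pos (by rwa [hdd]) hmax0.deriv_eq_zero ?_
    exact ContinuousAt.comp (by rw [hline0]; exact hf.continuousAt) (hline 0).continuousAt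
  have hconst : f ∘ line =ᶠ[𝓝 0] fun _ ↦ (f ∘ line) 0 := by
    filter_upwards [hmin, hmax0] with t h h' using le_antisymm h' h
  rw [← hdd, hconst.deriv.deriv_eq] at hpos
  simp at hpos

theorem contDiff_norm_sub_sq {n : WithTop ℕ∞} (a : E) : ContDiff ℝ n fun y ↦ ‖y - a‖ ^ 2 :=
  (contDiff_id.sub contDiff_const).norm_sq ℝ

theorem contDiffAt_norm_sub_rpow {n : WithTop ℕ∞} {a x : E} (hx : x ≠ a) (γ : ℝ) :
    ContDiffAt ℝ n (fun y ↦ ‖y - a‖ ^ γ) x :=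
  ((contDiffAt_id.sub contDiffAt_const).norm ℝ (sub_ne_zero.2 hx)).rpow_const_of_ne
    (norm_ne_zero_iff.2 (sub_ne_zero.2 hx))

theorem hasGradientAt_norm_sub_sq [CompleteSpace E] (a x : E) :
    HasGradientAt (fun y ↦ ‖y - a‖ ^ 2) ((2 : ℝ) • (x - a)) x := by
  rw [hasGradientAt_iff_hasFDerivAt, map_smul]
  exact ((hasFDerivAt_id x).sub_const a).norm_sq.congr_fderiv (by ext; simp)

end SecondDerivative

section Laplacian

variable {E F : Type*} [NormedAddCommGroup E] [InnerProductSpace ℝ E]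
  [NormedAddCommGroup F] [NormedSpace ℝ F]
  [FiniteDimensional ℝ E] {ι : Type*} [Fintype ι] {f g : E → ℝ} {x : E}

theorem laplacian_eq_sum_fderiv_fderiv (b : OrthonormalBasis ι ℝ E) (u : E → F) (x : E) :
    Δ u x = ∑ i, fderiv ℝ (fderiv ℝ u) x (b i) (b i) := by
  simp only [laplacian_eq_iteratedFDeriv_orthonormalBasis u b, iteratedFDeriv_two_apply,
    Matrix.cons_val_zero, Matrix.cons_val_one]

theorem sum_fderiv_mul_fderiv (b : OrthonormalBasis ι ℝ E) (f g : E → ℝ) (x : E) :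
    ∑ i, fderiv ℝ f x (b i) * fderiv ℝ g x (b i) = ⟪∇ f x, ∇ g x⟫_ℝ := by
  simp only [← inner_gradient_left, ← b.sum_inner_mul_inner (∇ f x) (∇ g x),
    real_inner_comm _ (b _)]

theorem contDiffAt_laplacian {u : E → F} {n m : WithTop ℕ∞} (hu : ContDiffAt ℝ n u x)
    (hmn : m + 2 ≤ n) : ContDiffAt ℝ m (Δ u) x := by
  have h2 : ContDiffAt ℝ m (fderiv ℝ (fderiv ℝ u)) x :=
    (hu.fderiv_right (m := m + 1) (by rwa [add_assoc, one_add_one_eq_two])).fderiv_right le_rfl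
  rw [funext (laplacian_eq_sum_fderiv_fderiv (stdOrthonormalBasis ℝ E) u)]
  exact ContDiffAt.sum fun i _ ↦ (h2.clm_apply contDiffAt_const).clm_apply contDiffAt_const

theorem laplacian_comp_add_right (u : E → F) (e x : E) :
    Δ (fun y ↦ u (y + e)) x = Δ u (x + e) := by
  have : fderiv ℝ (fun y ↦ u (y + e)) = fun y ↦ fderiv ℝ u (y + e) :=
    funext fun y ↦ fderiv_comp_add_right e
  simp only [laplacian_eq_sum_fderiv_fderiv (stdOrthonormalBasis ℝ E), this, fderiv_comp_add_right]

theorem laplacian_nonpos_of_isLocalMax (hmax : IsLocalMax f x) (hf : ContDiffAt ℝ 2 f x) :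
    Δ f x ≤ 0 := by
  rw [laplacian_eq_sum_fderiv_fderiv (stdOrthonormalBasis ℝ E)]
  exact Finset.sum_nonpos fun i _ ↦ fderiv_fderiv_apply_self_nonpos_of_isLocalMax hmax hf _

theorem laplacian_mul (hf : ContDiffAt ℝ 2 f x) (hg : ContDiffAt ℝ 2 g x) :
    Δ (f * g) x = f x * Δ g x + 2 * ⟪∇ f x, ∇ g x⟫_ℝ + g x * Δ f x := by
  have hfd := (hf.differentiableAt two_ne_zero).hasFDerivAt
  have hgd := (hg.differentiableAt two_ne_zero).hasFDerivAt
  have h1 : fderiv ℝ (f * g) =ᶠ[𝓝 x] fun y ↦ f y • fderiv ℝ g y + g y • fderiv ℝ f y := by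
    filter_upwards [eventually_differentiableAt hf,
      eventually_differentiableAt hg] with y h h' using fderiv_mul h h'
  have h2 : HasFDerivAt (fun y ↦ f y • fderiv ℝ g y + g y • fderiv ℝ f y) _ x :=
    (hfd.smul (differentiableAt_fderiv hg).hasFDerivAt).add
      (hgd.smul (differentiableAt_fderiv hf).hasFDerivAt)
  let b := stdOrthonormalBasis ℝ E
  simp only [laplacian_eq_sum_fderiv_fderiv b, ← sum_fderiv_mul_fderiv b, h1.fderiv_eq, h2.fderiv,
    Finset.mul_sum, ← Finset.sum_add_distrib]
  refine Finset.sum_congr rfl fun i _ ↦ ?_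
  simp only [add_apply, smul_apply, ContinuousLinearMap.smulRight_apply, smul_eq_mul]
  ring

theorem laplacian_comp {h h' : ℝ → ℝ} {h'' : ℝ} (hf : ContDiffAt ℝ 2 f x)
    (hh : ∀ᶠ t in 𝓝 (f x), HasDerivAt h (h' t) t) (hh' : HasDerivAt h' h'' (f x)) :
    Δ (h ∘ f) x = h' (f x) * Δ f x + h'' * ‖∇ f x‖ ^ 2 := by
  have hfd := (hf.differentiableAt two_ne_zero).hasFDerivAt
  have h1 : fderiv ℝ (h ∘ f) =ᶠ[𝓝 x] fun y ↦ h' (f y) • fderiv ℝ f y := by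
    filter_upwards [eventually_differentiableAt hf, hf.continuousAt.eventually hh]
      with y hy hhy using (hhy.comp_hasFDerivAt y hy.hasFDerivAt).fderiv
  have h2 : HasFDerivAt (fun y ↦ h' (f y) • fderiv ℝ f y) _ x :=
    (hh'.comp_hasFDerivAt x hfd).smul (differentiableAt_fderiv hf).hasFDerivAt
  let b := stdOrthonormalBasis ℝ E
  simp only [laplacian_eq_sum_fderiv_fderiv b, ← real_inner_self_eq_norm_sq,
    ← sum_fderiv_mul_fderiv b, h1.fderiv_eq, h2.fderiv, Finset.mul_sum, ← Finset.sum_add_distrib]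
  refine Finset.sum_congr rfl fun i _ ↦ ?_
  simp only [add_apply, smul_apply, ContinuousLinearMap.smulRight_apply, smul_eq_mul,
    Function.comp_apply]
  ring

theorem laplacian_norm_sub_sq (a x : E) :
    Δ (fun y : E ↦ ‖y - a‖ ^ 2) x = 2 * Module.finrank ℝ E := by
  have h1 : fderiv ℝ (fun y : E ↦ ‖y - a‖ ^ 2) = fun y ↦ (2 : ℝ) • innerSL ℝ (y - a) := by
    funext y
    ext v
    rw [(hasGradientAt_norm_sub_sq a y).fderiv_apply, real_inner_smul_left]
    rfl
  have h2 : HasFDerivAt (fun y ↦ (2 : ℝ) • innerSL ℝ (y - a)) ((2 : ℝ) • innerSL ℝ) x :=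
    ((innerSL ℝ).hasFDerivAt.comp x ((hasFDerivAt_id x).sub_const a)).const_smul (2 : ℝ)
  have h3 (v : E) (hv : ‖v‖ = 1) : ((2 : ℝ) • innerSL ℝ) v v = (2 : ℝ) := by
    rw [smul_apply, smul_apply, innerSL_apply_apply, real_inner_self_eq_norm_sq, hv]
    norm_num
  simp only [laplacian_eq_sum_fderiv_fderiv (stdOrthonormalBasis ℝ E), h1, h2.fderiv]
  rw [Finset.sum_congr rfl fun i _ ↦ h3 _ ((stdOrthonormalBasis ℝ E).norm_eq_one i)]
  simp [mul_comm]

theorem laplacian_norm_sub_rpow {a : E} (hx : x ≠ a) (γ : ℝ) :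
    Δ (fun y ↦ ‖y - a‖ ^ γ) x
      = γ * (γ + Module.finrank ℝ E - 2) * ‖x - a‖ ^ (γ - 2) := by
  have hpos : 0 < ‖x - a‖ := norm_pos_iff.2 (sub_ne_zero.2 hx)
  have hsq (c : ℝ) : (‖x - a‖ ^ 2) ^ c = ‖x - a‖ ^ (2 * c) := by
    rw [← Real.rpow_two, ← Real.rpow_mul hpos.le]
  have hcomp : (fun y ↦ ‖y - a‖ ^ γ) = (fun t : ℝ ↦ t ^ (γ / 2)) ∘ fun y ↦ ‖y - a‖ ^ 2 := by
    funext y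
    simp only [Function.comp_apply, ← Real.rpow_two, ← Real.rpow_mul (norm_nonneg _),
      mul_div_cancel₀ γ (two_ne_zero' ℝ)]
  have hderiv : ∀ᶠ t in 𝓝 (‖x - a‖ ^ 2),
      HasDerivAt (fun t : ℝ ↦ t ^ (γ / 2)) (γ / 2 * t ^ (γ / 2 - 1)) t := by
    filter_upwards [eventually_ne_nhds (pow_pos hpos 2).ne'] with t ht
    exact Real.hasDerivAt_rpow_const (.inl ht)
  have hderiv2 := (Real.hasDerivAt_rpow_const (p := γ / 2 - 1)
    (.inl (pow_pos hpos 2).ne')).const_mul (γ / 2)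
  have hpow : ‖x - a‖ ^ (2 * (γ / 2 - 1 - 1)) * ‖x - a‖ ^ 2 = ‖x - a‖ ^ (γ - 2) := by
    rw [← Real.rpow_two, ← Real.rpow_add hpos]; ring_nf
  rw [hcomp, laplacian_comp (contDiff_norm_sub_sq a).contDiffAt hderiv hderiv2,
    laplacian_norm_sub_sq, (hasGradientAt_norm_sub_sq a x).gradient, norm_smul, Real.norm_two,
    mul_pow, hsq, hsq, mul_sub, mul_div_cancel₀ γ (two_ne_zero' ℝ), mul_one]
  linear_combination γ * (γ - 2) * hpow

end Laplacian

section MaximumPrinciple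

theorem exists_isLocalMax_of_lt {X : Type*} [TopologicalSpace X] {K S : Set X} {f : X → ℝ} {m : ℝ}
    (hK : IsCompact K) (hS : IsClosed S) (hf : ContinuousOn f (K \ S))
    (hfr : ∀ x ∈ frontier K \ S, f x ≤ m) (hfS : ∀ᶠ x in 𝓝ˢ S, x ∉ S → f x ≤ m)
    {x : X} (hx : x ∈ K \ S) (hmx : m < f x) : ∃ z ∈ interior K \ S, IsLocalMax f z ∧ m < f z := by
  obtain ⟨V, hV, hSV, hfV⟩ := eventually_nhdsSet_iff_exists.1 hfS
  have hmem {y : X} (hyK : y ∈ K) (hyS : y ∉ S) (hy : m < f y) : y ∈ K \ V :=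
    ⟨hyK, fun hyV ↦ (hfV y hyV hyS).not_gt hy⟩
  obtain ⟨z, ⟨hzK, hzV⟩, hz⟩ := (hK.diff hV).exists_isMaxOn ⟨x, hmem hx.1 hx.2 hmx⟩
    (hf.mono (Set.sdiff_subset_sdiff_right hSV))
  have hmz : m < f z := hmx.trans_le (hz (hmem hx.1 hx.2 hmx))
  have hzS : z ∉ S := fun h ↦ hzV (hSV h)
  have hzint : z ∈ interior K := by
    by_contra hzint
    exact (hfr z ⟨⟨subset_closure hzK, hzint⟩, hzS⟩).not_gt hmz
  refine ⟨z, ⟨hzint, hzS⟩, ?_, hmz⟩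
  filter_upwards [mem_interior_iff_mem_nhds.1 hzint, hS.isOpen_compl.mem_nhds hzS] with y hyK hyS
  rcases le_or_gt (f y) m with hy | hy
  · exact hy.trans hmz.le
  · exact hz (hmem hyK hyS hy)

variable {E : Type*} [NormedAddCommGroup E] [InnerProductSpace ℝ E]

/-- The sum over the poles `b ∈ S` of the multiples `‖x - b‖ ^ (2 - n)` of the fundamental solution
of the Laplacian, where `n` is the dimension of the space. -/
noncomputable def fundamentalSum (S : Finset E) (x : E) : ℝ :=
  ∑ b ∈ S, ‖x - b‖ ^ (2 - Module.finrank ℝ E : ℝ)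

theorem fundamentalSum_nonneg (S : Finset E) (x : E) : 0 ≤ fundamentalSum S x :=
  Finset.sum_nonneg fun _ _ ↦ by positivity

theorem rpow_norm_sub_le_fundamentalSum {S : Finset E} {b : E} (hb : b ∈ S) (x : E) :
    ‖x - b‖ ^ (2 - Module.finrank ℝ E : ℝ) ≤ fundamentalSum S x :=
  Finset.single_le_sum (f := fun b ↦ ‖x - b‖ ^ (2 - Module.finrank ℝ E : ℝ))
    (fun _ _ ↦ by positivity) hb

variable [FiniteDimensional ℝ E]

theorem harmonicAt_norm_sub_rpow {a x : E} (hx : x ≠ a) :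
    HarmonicAt (fun y ↦ ‖y - a‖ ^ (2 - Module.finrank ℝ E : ℝ)) x := by
  refine ⟨contDiffAt_norm_sub_rpow hx _, ?_⟩
  filter_upwards [eventually_ne_nhds hx] with y hy
  rw [laplacian_norm_sub_rpow hy]
  simp

theorem harmonicAt_fundamentalSum {S : Finset E} {x : E} (hx : x ∉ S) :
    HarmonicAt (fundamentalSum S) x := by
  classical
  induction S using Finset.induction_on with
  | empty => exact harmonicAt_const 0
  | insert a S haS ih =>
    rw [Finset.mem_insert, not_or] at hx
    convert (harmonicAt_norm_sub_rpow hx.1).add (ih hx.2) using 1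
    funext y
    exact Finset.sum_insert haS

/-- Subtracting `ε • fundamentalSum S` makes `w` nonpositive near the poles, so an interior
maximum exists whenever the bound fails; then let `ε → 0`. -/
theorem le_of_laplacian_pos_of_isLittleO {K : Set E} {S : Finset E} {w : E → ℝ} {m : ℝ}
    (hm : 0 ≤ m) (hK : IsCompact K) (hw : ContinuousOn w (K \ S))
    (hC2 : ∀ x ∈ interior K \ S, ContDiffAt ℝ 2 w x) (hΔ : ∀ x ∈ interior K \ S, 0 < Δ w x)
    (hfr : ∀ x ∈ frontier K \ S, w x ≤ m)
    (hpole : ∀ b ∈ S, w =o[𝓝[≠] b] fun x ↦ ‖x - b‖ ^ (2 - Module.finrank ℝ E : ℝ)) :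
    ∀ x ∈ K \ S, w x ≤ m := by
  intro x hx
  have hmain {ε : ℝ} (hε : 0 < ε) : (w - ε • fundamentalSum S) x ≤ m := by
    have hle (y : E) : (w - ε • fundamentalSum S) y ≤ w y :=
      sub_le_self _ (mul_nonneg hε.le (fundamentalSum_nonneg S y))
    have hharm {y : E} (hy : y ∉ (S : Set E)) := (harmonicAt_fundamentalSum hy).const_smul (c := ε)
    by_contra! hlt
    obtain ⟨z, hz, hmax, -⟩ := exists_isLocalMax_of_lt hK S.finite_toSet.isClosed
      (hw.sub fun y hy ↦ (hharm hy.2).1.continuousAt.continuousWithinAt)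
      (fun y hy ↦ (hle y).trans (hfr y hy))
      (by
        refine eventually_nhdsSet_iff_forall.2 fun b hb ↦ ?_
        filter_upwards [eventually_nhdsWithin_iff.1 ((hpole b hb).bound hε)] with y hy hyS
        have hwy := (le_abs_self _).trans (hy fun h ↦ hyS (h ▸ hb))
        rw [Real.norm_of_nonneg (by positivity)] at hwy
        have := mul_le_mul_of_nonneg_left (rpow_norm_sub_le_fundamentalSum hb y) hε.le
        simp only [Pi.sub_apply, Pi.smul_apply, smul_eq_mul]
        linarith) hx hlt
    have hΔz := laplacian_nonpos_of_isLocalMax hmax ((hC2 z hz).sub (hharm hz.2).1)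
    rw [(hC2 z hz).laplacian_sub (hharm hz.2).1, (hharm hz.2).2.self_of_nhds] at hΔz
    exact (hΔ z hz).not_ge (by simpa using hΔz)
  have hlim : Tendsto (fun ε : ℝ ↦ (w - ε • fundamentalSum S) x) (𝓝[>] 0) (𝓝 (w x)) :=
    (Continuous.tendsto' (by fun_prop) 0 _ (by simp)).mono_left nhdsWithin_le_nhds
  exact le_of_tendsto hlim (eventually_mem_nhdsWithin.mono fun ε hε ↦ hmain hε)

end MaximumPrinciple

section InteriorEstimate

variable {E : Type*} [NormedAddCommGroup E] {u v : E → ℝ} {a x z : E} {r K L M₀ M₁ : ℝ}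

/-- The quadratic profile `r² - ‖x - a‖²`, a cutoff for the ball of radius `r` around `a`. -/
def ballCutoff (a : E) (r : ℝ) (x : E) : ℝ := r ^ 2 - ‖x - a‖ ^ 2

theorem ballCutoff_mem_Icc (hx : x ∈ closedBall a r) : ballCutoff a r x ∈ Set.Icc 0 (r ^ 2) :=
  ⟨sub_nonneg.2 (pow_le_pow_left₀ (norm_nonneg _) (mem_closedBall_iff_norm.1 hx) 2),
    sub_le_self _ (sq_nonneg _)⟩

/-- Bernstein's auxiliary function `φ² v + L u² - K u`, with `φ` the cutoff of a ball, whose maximum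
controls `v` at the centre of the ball. It is applied to `v = -Δ u`. -/
def bernsteinFunction (a : E) (r K L : ℝ) (u v : E → ℝ) : E → ℝ :=
  ballCutoff a r ^ 2 * v + L • u ^ 2 - K • u

theorem bernsteinFunction_apply_eq_sub (hM₀ : M₀ ≠ 0) :
    bernsteinFunction a r K (K / (4 * M₀)) u v x
      = ballCutoff a r x ^ 2 * v x - K / (4 * M₀) * (u x * (4 * M₀ - u x)) := by
  simp only [bernsteinFunction, Pi.sub_apply, Pi.add_apply, Pi.mul_apply, Pi.pow_apply,
    Pi.smul_apply, smul_eq_mul]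
  field_simp
  ring

theorem bernsteinFunction_apply_le (hK : 0 ≤ K) (hM₀ : 0 < M₀) (hu : u x ∈ Set.Icc 0 M₀) :
    bernsteinFunction a r K (K / (4 * M₀)) u v x ≤ ballCutoff a r x ^ 2 * v x := by
  rw [bernsteinFunction_apply_eq_sub hM₀.ne']
  exact sub_le_self _ (mul_nonneg (by positivity) (mul_nonneg hu.1 (by linarith [hu.2])))

variable [InnerProductSpace ℝ E]

theorem contDiff_ballCutoff (a : E) (r : ℝ) {n : WithTop ℕ∞} : ContDiff ℝ n (ballCutoff a r) :=
  contDiff_const.sub (contDiff_norm_sub_sq a)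

theorem contDiffAt_bernsteinFunction {n : WithTop ℕ∞} (hu : ContDiffAt ℝ n u z)
    (hv : ContDiffAt ℝ n v z) : ContDiffAt ℝ n (bernsteinFunction a r K L u v) z :=
  ((((contDiff_ballCutoff a r).contDiffAt.pow 2).mul hv).add ((hu.pow 2).const_smul L)).sub
    (hu.const_smul K)

variable [FiniteDimensional ℝ E]

theorem hasGradientAt_sq {f : E → ℝ} {f' : E} (hf : HasGradientAt f f' x) :
    HasGradientAt (f ^ 2) ((2 * f x) • f') x := by
  rw [hasGradientAt_iff_hasFDerivAt, map_smul]
  exact (hf.hasFDerivAt.pow 2).congr_fderiv (by simp)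

theorem laplacian_sq {f : E → ℝ} (hf : ContDiffAt ℝ 2 f x) :
    Δ (f ^ 2) x = 2 * f x * Δ f x + 2 * ‖∇ f x‖ ^ 2 := by
  rw [sq, laplacian_mul hf hf, real_inner_self_eq_norm_sq]
  ring

theorem hasGradientAt_ballCutoff (a : E) (r : ℝ) (x : E) :
    HasGradientAt (ballCutoff a r) ((-2 : ℝ) • (x - a)) x := by
  rw [hasGradientAt_iff_hasFDerivAt, neg_smul, map_neg]
  exact (hasGradientAt_norm_sub_sq a x).hasFDerivAt.const_sub _

theorem laplacian_ballCutoff (a : E) (r : ℝ) (x : E) :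
    Δ (ballCutoff a r) x = -2 * Module.finrank ℝ E := by
  have h : ballCutoff a r = (fun _ ↦ r ^ 2) - fun y ↦ ‖y - a‖ ^ 2 := rfl
  rw [h, contDiffAt_const.laplacian_sub (contDiff_norm_sub_sq a).contDiffAt,
    laplacian_norm_sub_sq, laplacian_const]
  simp

theorem gradient_eq_of_isLocalMax_bernsteinFunction
    (hmax : IsLocalMax (bernsteinFunction a r K L u v) z) (hu : DifferentiableAt ℝ u z)
    (hv : DifferentiableAt ℝ v z) :
    ballCutoff a r z ^ 2 • ∇ v z
      = (4 * ballCutoff a r z * v z) • (z - a) + (K - 2 * L * u z) • ∇ u z := by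
  have hderiv := (((hasGradientAt_sq (hasGradientAt_ballCutoff a r z)).hasFDerivAt.mul
    hv.hasFDerivAt).add ((hasGradientAt_sq hu.hasGradientAt).hasFDerivAt.const_smul L)).sub
    (hu.hasFDerivAt.const_smul K)
  have hzero := hmax.hasFDerivAt_eq_zero hderiv
  refine ext_inner_right ℝ fun y ↦ ?_
  have hy := DFunLike.congr_fun hzero y
  simp only [inner_add_left, real_inner_smul_left, ← inner_gradient_left, sub_apply,
    add_apply, smul_apply, toDual_apply_apply, smul_eq_mul, zero_apply, Pi.pow_apply] at hy ⊢
  linear_combination hy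

theorem laplacian_bernsteinFunction (hu : ContDiffAt ℝ 2 u z) (hv : ContDiffAt ℝ 2 v z) :
    Δ (bernsteinFunction a r K L u v) z
      = ballCutoff a r z ^ 2 * Δ v z - 8 * ballCutoff a r z * ⟪z - a, ∇ v z⟫_ℝ
        + (8 * ‖z - a‖ ^ 2 - 4 * Module.finrank ℝ E * ballCutoff a r z) * v z
        + (2 * L * u z - K) * Δ u z + 2 * L * ‖∇ u z‖ ^ 2 := by
  have hφ : ContDiffAt ℝ 2 (ballCutoff a r) z := (contDiff_ballCutoff a r).contDiffAt
  have hsq : ContDiffAt ℝ 2 (u ^ 2) z := hu.pow 2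
  have hφsq : ContDiffAt ℝ 2 (ballCutoff a r ^ 2) z := hφ.pow 2
  have hL : ContDiffAt ℝ 2 (L • u ^ 2) z := hsq.const_smul L
  have hmul : ContDiffAt ℝ 2 (ballCutoff a r ^ 2 * v) z := hφsq.mul hv
  have hsum : ContDiffAt ℝ 2 (ballCutoff a r ^ 2 * v + L • u ^ 2) z := hmul.add hL
  have hK : ContDiffAt ℝ 2 (K • u) z := hu.const_smul K
  rw [bernsteinFunction, hsum.laplacian_sub hK, hmul.laplacian_add hL,
    laplacian_smul L hsq, laplacian_smul K hu, laplacian_mul hφsq hv, laplacian_sq hφ,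
    laplacian_sq hu, laplacian_ballCutoff, (hasGradientAt_ballCutoff a r z).gradient,
    (hasGradientAt_sq (hasGradientAt_ballCutoff a r z)).gradient]
  simp only [smul_smul, real_inner_smul_left, norm_smul, Pi.pow_apply, smul_eq_mul,
    Real.norm_eq_abs, mul_pow, sq_abs]
  ring

/-- The mixed term is absorbed by completing the square `‖φ • ∇ u - (2 T / L) • (z - a)‖² ≥ 0`
where `T = K - 2 L u`. -/
theorem mul_sq_ballCutoff_le_of_isLocalMax (hL : 0 < L)
    (hmax : IsLocalMax (bernsteinFunction a r K L u (-Δ u)) z)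
    (hu : ContDiffAt ℝ 4 u z) :
    ballCutoff a r z ^ 2 * ((K - 2 * L * u z - 24 * ‖z - a‖ ^ 2
        - 4 * Module.finrank ℝ E * ballCutoff a r z) * -Δ u z)
      ≤ ballCutoff a r z ^ 4 * Δ (Δ u) z + 8 * (K - 2 * L * u z) ^ 2 * ‖z - a‖ ^ 2 / L := by
  have hu2 : ContDiffAt ℝ 2 u z := hu.of_le (by norm_num)
  have hv : ContDiffAt ℝ 2 (-Δ u) z := (contDiffAt_laplacian hu (by norm_num)).neg
  have hΔ := laplacian_nonpos_of_isLocalMax hmax (contDiffAt_bernsteinFunction hu2 hv)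
  have hgrad := congrArg (fun y ↦ ⟪z - a, y⟫_ℝ) <| gradient_eq_of_isLocalMax_bernsteinFunction
    hmax (hu2.differentiableAt two_ne_zero) (hv.differentiableAt two_ne_zero)
  simp only [inner_add_right, real_inner_smul_right, real_inner_self_eq_norm_sq] at hgrad
  have hsquare :
      0 ≤ 2 * L * ‖ballCutoff a r z • ∇ u z - (2 * (K - 2 * L * u z) / L) • (z - a)‖ ^ 2 := by
    positivity
  have hexpand : 2 * L * ‖ballCutoff a r z • ∇ u z - (2 * (K - 2 * L * u z) / L) • (z - a)‖ ^ 2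
      = 2 * L * ballCutoff a r z ^ 2 * ‖∇ u z‖ ^ 2
        - 8 * ballCutoff a r z * (K - 2 * L * u z) * ⟪z - a, ∇ u z⟫_ℝ
        + 8 * (K - 2 * L * u z) ^ 2 * ‖z - a‖ ^ 2 / L := by
    rw [norm_sub_sq_real, norm_smul, norm_smul, real_inner_smul_left, real_inner_smul_right,
      real_inner_comm, mul_pow, mul_pow, Real.norm_eq_abs, Real.norm_eq_abs, sq_abs, sq_abs]
    field_simp
    ring
  rw [laplacian_bernsteinFunction hu2 hv, laplacian_neg, Pi.neg_apply, Pi.neg_apply] at hΔ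
  have hΔφ := mul_nonpos_of_nonneg_of_nonpos (sq_nonneg (ballCutoff a r z)) hΔ
  rw [Pi.neg_apply] at hgrad
  linear_combination hΔφ + 8 * ballCutoff a r z * hgrad + hsquare + hexpand

/-- With `L = K / (4 M₀)` the coefficient `K - 2 L u` stays in `[K / 2, K]`, and the terms
produced by differentiating the cutoff cost at most another `K / 4`. -/
theorem sq_ballCutoff_mul_le_of_isLocalMax (hr : 0 < r) (hM₀ : 0 < M₀) (hM₁ : 0 ≤ M₁)
    (hK : K = (16 * Module.finrank ℝ E + 96) * r ^ 2)
    (hmax : IsLocalMax (bernsteinFunction a r K (K / (4 * M₀)) u (-Δ u)) z)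
    (hz : z ∈ closedBall a r) (hu : ContDiffAt ℝ 4 u z) (huz : u z ∈ Set.Icc 0 M₀)
    (hΔu : Δ u z ≤ 0) (hΔΔu : Δ (Δ u) z ≤ M₁) :
    ballCutoff a r z ^ 2 * -Δ u z ≤ 128 * r ^ 2 * M₀ + r ^ 6 * M₁ := by
  obtain ⟨hφ₀, hφr⟩ := ballCutoff_mem_Icc hz
  have hKpos : 0 < K := by rw [hK]; positivity
  have hv : 0 ≤ -Δ u z := neg_nonneg.2 hΔu
  have hqr : ‖z - a‖ ^ 2 ≤ r ^ 2 := sub_nonneg.1 hφ₀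
  have hT : K / 2 ≤ K - 2 * (K / (4 * M₀)) * u z ∧ K - 2 * (K / (4 * M₀)) * u z ≤ K := by
    have h : K / (4 * M₀) * u z ≤ K / 4 := by
      calc K / (4 * M₀) * u z ≤ K / (4 * M₀) * M₀ := by gcongr; exact huz.2
        _ = K / 4 := by field_simp
    have h' : 0 ≤ K / (4 * M₀) * u z := mul_nonneg (by positivity) huz.1
    constructor <;> linarith
  have hcoef : K / 4 ≤ K - 2 * (K / (4 * M₀)) * u z - 24 * ‖z - a‖ ^ 2
      - 4 * Module.finrank ℝ E * ballCutoff a r z := by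
    have : Module.finrank ℝ E * ballCutoff a r z ≤ Module.finrank ℝ E * r ^ 2 := by gcongr
    linarith
  have hf : ballCutoff a r z ^ 4 * Δ (Δ u) z ≤ (r ^ 2) ^ 4 * M₁ :=
    (mul_le_mul_of_nonneg_left hΔΔu (by positivity)).trans (by gcongr)
  have hbound : K / 4 * (ballCutoff a r z ^ 2 * -Δ u z) ≤ r ^ 8 * M₁ + 32 * K * r ^ 2 * M₀ :=
    calc K / 4 * (ballCutoff a r z ^ 2 * -Δ u z)
        = ballCutoff a r z ^ 2 * (K / 4 * -Δ u z) := by ring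
      _ ≤ ballCutoff a r z ^ 2 * ((K - 2 * (K / (4 * M₀)) * u z - 24 * ‖z - a‖ ^ 2
          - 4 * Module.finrank ℝ E * ballCutoff a r z) * -Δ u z) := by gcongr
      _ ≤ ballCutoff a r z ^ 4 * Δ (Δ u) z
          + 8 * (K - 2 * (K / (4 * M₀)) * u z) ^ 2 * ‖z - a‖ ^ 2 / (K / (4 * M₀)) :=
        mul_sq_ballCutoff_le_of_isLocalMax (by positivity) hmax hu
      _ ≤ (r ^ 2) ^ 4 * M₁ + 8 * K ^ 2 * r ^ 2 / (K / (4 * M₀)) := by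
        refine add_le_add hf ?_
        gcongr
        exacts [(half_pos hKpos).le.trans hT.1, hT.2]
      _ = r ^ 8 * M₁ + 32 * K * r ^ 2 * M₀ := by field_simp; ring
  have hKr : r ^ 2 ≤ K / 4 := by
    rw [hK]; nlinarith [sq_nonneg r, (Module.finrank ℝ E).cast_nonneg (α := ℝ)]
  have hM : r ^ 2 * (r ^ 6 * M₁) ≤ K / 4 * (r ^ 6 * M₁) := by gcongr
  refine le_of_mul_le_mul_left (hbound.trans ?_) (show 0 < K / 4 by positivity)
  linarith

theorem bernsteinFunction_le_of_bilaplacian_le (hr : 0 < r) (hM₀ : 0 < M₀) (hM₁ : 0 ≤ M₁)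
    (hK : K = (16 * Module.finrank ℝ E + 96) * r ^ 2)
    (hu : ∀ x ∈ closedBall a r, ContDiffAt ℝ 4 u x)
    (huM : ∀ x ∈ closedBall a r, u x ∈ Set.Icc 0 M₀)
    (hΔu : ∀ x ∈ closedBall a r, Δ u x ≤ 0)
    (hΔΔu : ∀ x ∈ closedBall a r, Δ (Δ u) x ≤ M₁) (hx : x ∈ closedBall a r) :
    bernsteinFunction a r K (K / (4 * M₀)) u (-Δ u) x ≤ 128 * r ^ 2 * M₀ + r ^ 6 * M₁ := by
  have hK₀ : 0 ≤ K := by rw [hK]; positivity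
  have hle {y : E} (hy : y ∈ closedBall a r) :
      bernsteinFunction a r K (K / (4 * M₀)) u (-Δ u) y ≤ ballCutoff a r y ^ 2 * -Δ u y :=
    bernsteinFunction_apply_le hK₀ hM₀ (huM y hy)
  have hcont : ContinuousOn (bernsteinFunction a r K (K / (4 * M₀)) u (-Δ u))
      (closedBall a r \ ∅) := fun y hy ↦
    (contDiffAt_bernsteinFunction (n := 2) ((hu y hy.1).of_le (by norm_num))
      (contDiffAt_laplacian (hu y hy.1) (by norm_num)).neg).continuousAt.continuousWithinAt
  have hbdry : ∀ y ∈ frontier (closedBall a r) \ ∅,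
      bernsteinFunction a r K (K / (4 * M₀)) u (-Δ u) y ≤ 128 * r ^ 2 * M₀ + r ^ 6 * M₁ := by
    rintro y ⟨hy, -⟩
    rw [frontier_closedBall a hr.ne', mem_sphere_iff_norm] at hy
    refine (hle (mem_closedBall_iff_norm.2 hy.le)).trans ?_
    rw [ballCutoff, hy, sub_self, zero_pow two_ne_zero, zero_mul]
    positivity
  by_contra! hlt
  obtain ⟨z, hz, hmax, hltz⟩ := exists_isLocalMax_of_lt (isCompact_closedBall a r) isClosed_empty
    hcont hbdry (by simp) ⟨hx, Set.notMem_empty x⟩ hlt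
  have hzr := interior_subset hz.1
  exact hltz.not_ge <| (hle hzr).trans <| sq_ballCutoff_mul_le_of_isLocalMax hr hM₀ hM₁ hK
    hmax hzr (hu z hzr) (huM z hzr) (hΔu z hzr) (hΔΔu z hzr)

theorem neg_laplacian_le_of_bilaplacian_le (hr : 0 < r) (hM₀ : 0 < M₀) (hM₁ : 0 ≤ M₁)
    (hu : ∀ x ∈ closedBall a r, ContDiffAt ℝ 4 u x)
    (huM : ∀ x ∈ closedBall a r, u x ∈ Set.Icc 0 M₀)
    (hΔu : ∀ x ∈ closedBall a r, Δ u x ≤ 0)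
    (hΔΔu : ∀ x ∈ closedBall a r, Δ (Δ u) x ≤ M₁) :
    -Δ u a ≤ (12 * Module.finrank ℝ E + 200) * M₀ / r ^ 2 + r ^ 2 * M₁ := by
  have ha : a ∈ closedBall a r := mem_closedBall_self hr.le
  have hle := bernsteinFunction_le_of_bilaplacian_le hr hM₀ hM₁ rfl hu huM hΔu hΔΔu ha
  rw [bernsteinFunction_apply_eq_sub hM₀.ne', ballCutoff, sub_self, norm_zero] at hle
  set K : ℝ := (16 * Module.finrank ℝ E + 96) * r ^ 2 with hK
  have hua : u a * (4 * M₀ - u a) ≤ 3 * M₀ ^ 2 := by nlinarith [(huM a ha).1, (huM a ha).2]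
  have hKa : K / (4 * M₀) * (u a * (4 * M₀ - u a)) ≤ K / (4 * M₀) * (3 * M₀ ^ 2) := by gcongr
  rw [← mul_le_mul_iff_right₀ (pow_pos hr 4)]
  calc r ^ 4 * -Δ u a ≤ 128 * r ^ 2 * M₀ + r ^ 6 * M₁ + K / (4 * M₀) * (3 * M₀ ^ 2) := by
        rw [Pi.neg_apply] at hle
        linarith
    _ = r ^ 4 * ((12 * Module.finrank ℝ E + 200) * M₀ / r ^ 2 + r ^ 2 * M₁) := by
      rw [hK]
      field_simp
      ring

end InteriorEstimate

section Punctured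

variable {V : Type*} [NormedAddCommGroup V]

theorem isLittleO_norm_rpow_norm_rpow {p q : ℝ} (hpq : p < q) :
    (fun x : V ↦ ‖x‖ ^ q) =o[𝓝[≠] 0] fun x ↦ ‖x‖ ^ p := by
  refine IsLittleO.comp_tendsto (g := fun t : ℝ ↦ t ^ p) (f := fun t ↦ t ^ q)
    ((isLittleO_iff_tendsto' ?_).2 ?_) tendsto_norm_nhdsNE_zero
  · filter_upwards [self_mem_nhdsWithin] with t (ht : 0 < t) h using
      absurd h (Real.rpow_pos_of_pos ht p).ne'
  · have hpow : Tendsto (fun t : ℝ ↦ t ^ (q - p)) (𝓝[>] 0) (𝓝 0) := by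
      simpa only [Real.zero_rpow (sub_pos.2 hpq).ne'] using
        (Real.continuousAt_rpow_const 0 (q - p) (.inr (sub_pos.2 hpq).le)).tendsto.mono_left
          nhdsWithin_le_nhds
    refine hpow.congr' ?_
    filter_upwards [self_mem_nhdsWithin] with t ht using Real.rpow_sub ht q p

theorem isBigO_norm_rpow_norm_rpow {p q : ℝ} (hpq : p ≤ q) :
    (fun x : V ↦ ‖x‖ ^ q) =O[𝓝[≠] 0] fun x ↦ ‖x‖ ^ p := by
  rcases hpq.eq_or_lt with rfl | h
  exacts [isBigO_refl _ _, (isLittleO_norm_rpow_norm_rpow h).isBigO]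

theorem rpow_le_two_rpow_abs_mul_rpow {a b : ℝ} (ha : 0 < a) (h₁ : a / 2 ≤ b) (h₂ : b ≤ 2 * a)
    (q : ℝ) : b ^ q ≤ 2 ^ |q| * a ^ q := by
  rcases le_total 0 q with hq | hq
  · rw [abs_of_nonneg hq, ← Real.mul_rpow zero_le_two ha.le]
    exact Real.rpow_le_rpow ((half_pos ha).le.trans h₁) h₂ hq
  · calc b ^ q ≤ (a / 2) ^ q := Real.rpow_le_rpow_of_nonpos (half_pos ha) h₁ hq
      _ = 2 ^ |q| * a ^ q := by
        rw [abs_of_nonpos hq, Real.div_rpow ha.le zero_le_two, Real.rpow_neg zero_le_two]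
        field_simp

theorem norm_mem_Icc_of_mem_closedBall_half {x y : V} (hy : y ∈ closedBall x (‖x‖ / 2)) :
    ‖y‖ ∈ Set.Icc (‖x‖ / 2) (2 * ‖x‖) := by
  have h := (abs_norm_sub_norm_le y x).trans (mem_closedBall_iff_norm.1 hy)
  constructor <;> linarith [abs_le.1 h, norm_nonneg x]

theorem eventually_forall_mem_closedBall_half {P : V → Prop} (hP : ∀ᶠ x in 𝓝[≠] 0, P x) :
    ∀ᶠ x in 𝓝[≠] 0, ∀ y ∈ closedBall x (‖x‖ / 2), P y := by
  obtain ⟨ε, hε, h⟩ := Metric.mem_nhdsWithin_iff.1 hP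
  have hball : ball (0 : V) (ε / 2) ∈ 𝓝[≠] 0 :=
    mem_nhdsWithin_of_mem_nhds (ball_mem_nhds _ (half_pos hε))
  filter_upwards [hball, self_mem_nhdsWithin] with x hx hx0 y hy
  have hxy := norm_mem_Icc_of_mem_closedBall_half hy
  have hxpos : 0 < ‖x‖ := norm_pos_iff.2 hx0
  rw [mem_ball_zero_iff] at hx
  exact h ⟨mem_ball_zero_iff.2 (by linarith [hxy.2]),
    norm_pos_iff.1 ((half_pos hxpos).trans_le hxy.1)⟩

theorem exists_forall_mem_closedBall_diff_singleton {P : V → Prop} (hP : ∀ᶠ x in 𝓝[≠] 0, P x) :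
    ∃ R > 0, ∀ x ∈ closedBall (0 : V) R \ {0}, P x := by
  obtain ⟨ε, hε, h⟩ := Metric.mem_nhdsWithin_iff.1 hP
  exact ⟨ε / 2, half_pos hε, fun x hx ↦
    h ⟨closedBall_subset_ball (half_lt_self hε) hx.1, hx.2⟩⟩

end Punctured

section Decay

variable {E : Type*} [NormedAddCommGroup E] [InnerProductSpace ℝ E] [FiniteDimensional ℝ E]
  {u : E → ℝ} {p q M : ℝ}

/-- `u` is of class `C⁴`, nonnegative and superharmonic in a punctured neighbourhood of the origin.
Superharmonicity is not required to be strict. -/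
structure IsNonnegSuperharmonicNearZero (u : E → ℝ) : Prop where
  contDiffAt : ∀ᶠ x in 𝓝[≠] 0, ContDiffAt ℝ 4 u x
  nonneg : ∀ᶠ x in 𝓝[≠] 0, 0 ≤ u x
  laplacian_nonpos : ∀ᶠ x in 𝓝[≠] 0, Δ u x ≤ 0

theorem IsNonnegSuperharmonicNearZero.eventually_neg_laplacian_le
    (hu : IsNonnegSuperharmonicNearZero u) (hM : 0 ≤ M)
    (hΔΔ : ∀ᶠ x in 𝓝[≠] 0, Δ (Δ u) x ≤ M * ‖x‖ ^ q) (ho : u =o[𝓝[≠] 0] fun x ↦ ‖x‖ ^ p)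
    {δ : ℝ} (hδ : 0 < δ) :
    ∀ᶠ x in 𝓝[≠] 0, -Δ u x ≤ δ * ‖x‖ ^ (p - 2) + M * 2 ^ |q| * ‖x‖ ^ (q + 2) := by
  let C : ℝ := 4 * (12 * Module.finrank ℝ E + 200) * 2 ^ |p|
  have hC : 0 < C := by positivity
  filter_upwards [self_mem_nhdsWithin, eventually_forall_mem_closedBall_half <|
    hu.contDiffAt.and <| hu.nonneg.and <| hu.laplacian_nonpos.and <| hΔΔ.and <|
    ho.bound (div_pos hδ hC)] with x hx hball
  have hxpos : 0 < ‖x‖ := norm_pos_iff.2 hx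
  have hscale {y : E} (hy : y ∈ closedBall x (‖x‖ / 2)) (t : ℝ) : ‖y‖ ^ t ≤ 2 ^ |t| * ‖x‖ ^ t :=
    have hxy := norm_mem_Icc_of_mem_closedBall_half hy
    rpow_le_two_rpow_abs_mul_rpow hxpos hxy.1 hxy.2 t
  have hest := neg_laplacian_le_of_bilaplacian_le (a := x) (r := ‖x‖ / 2) (u := u)
    (M₀ := δ / C * (2 ^ |p| * ‖x‖ ^ p)) (M₁ := M * (2 ^ |q| * ‖x‖ ^ q))
    (by positivity) (by positivity) (by positivity) (fun y hy ↦ (hball y hy).1)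
    (fun y hy ↦ ⟨(hball y hy).2.1, ?_⟩) (fun y hy ↦ (hball y hy).2.2.1)
    (fun y hy ↦ (hball y hy).2.2.2.1.trans (mul_le_mul_of_nonneg_left (hscale hy q) hM))
  · refine hest.trans ?_
    rw [Real.rpow_sub hxpos, Real.rpow_add hxpos, Real.rpow_two]
    refine add_le_add (le_of_eq ?_) ?_
    · simp only [C]
      field_simp
      ring
    · have : 0 ≤ M * 2 ^ |q| * (‖x‖ ^ q * ‖x‖ ^ 2) := by positivity
      linarith
  · refine (le_abs_self _).trans ((hball y hy).2.2.2.2.trans ?_)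
    rw [Real.norm_of_nonneg (by positivity)]
    gcongr
    exact hscale hy p

theorem IsNonnegSuperharmonicNearZero.laplacian_isLittleO
    (hu : IsNonnegSuperharmonicNearZero u) (hM : 0 ≤ M) (hpq : p - 4 < q)
    (hΔΔ : ∀ᶠ x in 𝓝[≠] 0, Δ (Δ u) x ≤ M * ‖x‖ ^ q) (ho : u =o[𝓝[≠] 0] fun x ↦ ‖x‖ ^ p) :
    Δ u =o[𝓝[≠] 0] fun x ↦ ‖x‖ ^ (p - 2) := by
  refine isLittleO_iff.2 fun c hc ↦ ?_
  have hsmall := (isLittleO_norm_rpow_norm_rpow (V := E)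
    (show p - 2 < q + 2 by linarith)).const_mul_left (M * 2 ^ |q|)
  filter_upwards [hu.laplacian_nonpos, hsmall.bound (half_pos hc),
    hu.eventually_neg_laplacian_le hM hΔΔ ho (half_pos hc)] with x hΔ hsm hle
  rw [Real.norm_of_nonneg (by positivity), Real.norm_of_nonneg (by positivity)] at hsm
  rw [Real.norm_of_nonpos hΔ, Real.norm_of_nonneg (by positivity)]
  linarith

end Decay

section Comparison

variable {E : Type*} [NormedAddCommGroup E] [InnerProductSpace ℝ E]
  {u w : E → ℝ} {γ M : ℝ}

theorem contDiffAt_norm_rpow {x : E} (hx : x ≠ 0) (γ : ℝ) {n : WithTop ℕ∞} :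
    ContDiffAt ℝ n (fun y : E ↦ ‖y‖ ^ γ) x := by
  simpa only [sub_zero] using contDiffAt_norm_sub_rpow hx γ

variable [FiniteDimensional ℝ E]

theorem laplacian_norm_rpow {x : E} (hx : x ≠ 0) (γ : ℝ) :
    Δ (fun y : E ↦ ‖y‖ ^ γ) x = γ * (γ + Module.finrank ℝ E - 2) * ‖x‖ ^ (γ - 2) := by
  simpa only [sub_zero] using laplacian_norm_sub_rpow hx γ

theorem exists_eventually_le_of_laplacian_pos
    (hw : ∀ᶠ x in 𝓝[≠] 0, ContDiffAt ℝ 2 w x) (hΔ : ∀ᶠ x in 𝓝[≠] 0, 0 < Δ w x)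
    (ho : w =o[𝓝[≠] 0] fun x ↦ ‖x‖ ^ (2 - Module.finrank ℝ E : ℝ)) :
    ∃ m, ∀ᶠ x in 𝓝[≠] 0, w x ≤ m := by
  obtain ⟨R, hR, h⟩ := exists_forall_mem_closedBall_diff_singleton (hw.and hΔ)
  have hcont : ContinuousOn w (closedBall 0 R \ {0}) := fun x hx ↦
    (h x hx).1.continuousAt.continuousWithinAt
  have hsub : sphere (0 : E) R ⊆ closedBall 0 R \ {0} := fun x hx ↦
    ⟨sphere_subset_closedBall hx, ne_of_mem_sphere hx hR.ne'⟩
  obtain ⟨m, hm⟩ := (isCompact_sphere (0 : E) R).exists_bound_of_continuousOn (hcont.mono hsub)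
  have hle := le_of_laplacian_pos_of_isLittleO (S := {0}) (m := max m 0) (le_max_right _ _)
    (isCompact_closedBall (0 : E) R)
    (by simpa only [Finset.coe_singleton] using hcont)
    (fun x hx ↦ (h x ⟨interior_subset hx.1, by simpa using hx.2⟩).1)
    (fun x hx ↦ (h x ⟨interior_subset hx.1, by simpa using hx.2⟩).2)
    (fun x hx ↦ (le_abs_self _).trans <|
      (hm x (by simpa only [frontier_closedBall _ hR.ne'] using hx.1)).trans (le_max_left _ _))
    (by simpa only [Finset.mem_singleton, forall_eq, sub_zero] using ho)
  refine ⟨max m 0, ?_⟩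
  filter_upwards [mem_nhdsWithin_of_mem_nhds (closedBall_mem_nhds (0 : E) hR), self_mem_nhdsWithin]
    with x hx hx0 using hle x ⟨hx, by simpa using hx0⟩

theorem isBigO_rpow_of_neg_laplacian_le (hγn : 2 - Module.finrank ℝ E < γ) (hγ : γ ≠ 0)
    (hw : ∀ᶠ x in 𝓝[≠] 0, ContDiffAt ℝ 2 w x) (hw₀ : ∀ᶠ x in 𝓝[≠] 0, 0 ≤ w x)
    (hΔ : ∀ᶠ x in 𝓝[≠] 0, -Δ w x ≤ M * ‖x‖ ^ (γ - 2))
    (ho : w =o[𝓝[≠] 0] fun x ↦ ‖x‖ ^ (2 - Module.finrank ℝ E : ℝ)) :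
    w =O[𝓝[≠] 0] fun x ↦ ‖x‖ ^ min γ 0 := by
  let A : ℝ := (M + 1) / (γ * (γ + Module.finrank ℝ E - 2))
  have hden : γ * (γ + Module.finrank ℝ E - 2) ≠ 0 := mul_ne_zero hγ (by linarith)
  have hbarrier {x : E} (hx : x ≠ 0) : ContDiffAt ℝ 2 (A • fun y : E ↦ ‖y‖ ^ γ) x :=
    (contDiffAt_norm_rpow hx γ).const_smul A
  obtain ⟨m, hm⟩ := exists_eventually_le_of_laplacian_pos (w := w + A • fun y : E ↦ ‖y‖ ^ γ)
    (by filter_upwards [hw, self_mem_nhdsWithin] with x hx hx0 using hx.add (hbarrier hx0))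
    (by
      filter_upwards [hw, hΔ, self_mem_nhdsWithin] with x hx hΔx hx0
      rw [hx.laplacian_add (hbarrier hx0), laplacian_smul A (contDiffAt_norm_rpow hx0 γ),
        laplacian_norm_rpow hx0, smul_eq_mul, ← mul_assoc, div_mul_cancel₀ _ hden]
      have : 0 < ‖x‖ ^ (γ - 2) := Real.rpow_pos_of_pos (norm_pos_iff.2 hx0) _
      linarith)
    (ho.add ((isLittleO_norm_rpow_norm_rpow hγn).const_mul_left A))
  have hle : w =O[𝓝[≠] 0] fun x ↦ |m| * ‖x‖ ^ (0 : ℝ) + |A| * ‖x‖ ^ γ := by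
    refine .of_norm_eventuallyLE ?_
    filter_upwards [hm, hw₀] with x hmx hx₀
    have hA : -A * ‖x‖ ^ γ ≤ |A| * ‖x‖ ^ γ := by
      gcongr
      exact neg_le_abs A
    rw [Real.norm_of_nonneg hx₀, Real.rpow_zero, mul_one]
    simp only [Pi.add_apply, Pi.smul_apply, smul_eq_mul] at hmx
    linarith [le_abs_self m]
  exact hle.trans <| ((isBigO_norm_rpow_norm_rpow (min_le_right γ 0)).const_mul_left _).add
    ((isBigO_norm_rpow_norm_rpow (min_le_left γ 0)).const_mul_left _)

theorem IsNonnegSuperharmonicNearZero.laplacian_isBigO (hu : IsNonnegSuperharmonicNearZero u)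
    (hM : 0 ≤ M) (hγn : 2 - Module.finrank ℝ E < γ) (hγ : γ ≠ 0)
    (hΔΔ : ∀ᶠ x in 𝓝[≠] 0, Δ (Δ u) x ≤ M * ‖x‖ ^ (γ - 2))
    (ho : u =o[𝓝[≠] 0] fun x ↦ ‖x‖ ^ (4 - Module.finrank ℝ E : ℝ)) :
    Δ u =O[𝓝[≠] 0] fun x ↦ ‖x‖ ^ min γ 0 := by
  have hΔo : Δ u =o[𝓝[≠] 0] fun x ↦ ‖x‖ ^ (2 - Module.finrank ℝ E : ℝ) := by
    convert hu.laplacian_isLittleO hM (by linarith) hΔΔ ho using 3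
    ring
  refine isBigO_neg_left.1 (isBigO_rpow_of_neg_laplacian_le (w := -Δ u) (M := M) hγn hγ ?_ ?_ ?_
    hΔo.neg_left)
  · filter_upwards [hu.contDiffAt] with x hx using (contDiffAt_laplacian hx (by norm_num)).neg
  · filter_upwards [hu.laplacian_nonpos] with x hx using neg_nonneg.2 hx
  · filter_upwards [hΔΔ] with x hx
    rwa [laplacian_neg, Pi.neg_apply, neg_neg]

theorem IsNonnegSuperharmonicNearZero.isBigO (hu : IsNonnegSuperharmonicNearZero u) (hM : 0 ≤ M)
    (hγn : 4 - Module.finrank ℝ E < γ) (hγ : γ < 0)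
    (hΔΔ : ∀ᶠ x in 𝓝[≠] 0, Δ (Δ u) x ≤ M * ‖x‖ ^ (γ - 4))
    (ho : u =o[𝓝[≠] 0] fun x ↦ ‖x‖ ^ (4 - Module.finrank ℝ E : ℝ)) :
    u =O[𝓝[≠] 0] fun x ↦ ‖x‖ ^ γ := by
  have hΔO := hu.laplacian_isBigO (γ := γ - 2) hM (by linarith) (by linarith)
    (by convert hΔΔ using 5; ring) ho
  rw [min_eq_left (by linarith)] at hΔO
  obtain ⟨C, hC⟩ := hΔO.bound
  rw [← min_eq_left hγ.le]
  refine isBigO_rpow_of_neg_laplacian_le (M := C) (by linarith) hγ.ne ?_ hu.nonneg ?_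
    (ho.trans_isBigO (isBigO_norm_rpow_norm_rpow (by linarith)))
  · filter_upwards [hu.contDiffAt] with x hx using hx.of_le (by norm_num)
  · filter_upwards [hC] with x hx
    rw [Real.norm_of_nonneg (by positivity : 0 ≤ ‖x‖ ^ (γ - 2))] at hx
    exact (neg_le_abs _).trans hx

end Comparison

section RemovableSingularity

theorem exists_forall_translate_sub_lt_of_isCompact {V : Type*} [SeminormedAddCommGroup V]
    {u : V → ℝ} {K : Set V} (hK : IsCompact K) (hu : ∀ z ∈ K, ContinuousAt u z) {ε : ℝ}
    (hε : 0 < ε) : ∃ δ > 0, ∀ z ∈ K, ∀ e, ‖e‖ < δ → u (z + e) - u z < ε := by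
  obtain ⟨δ, hδ, h⟩ := Metric.mem_uniformity_dist.1 <|
    hK.uniformContinuousAt_of_continuousAt u hu (Metric.dist_mem_uniformity hε)
  refine ⟨δ, hδ, fun z hz e he ↦ ?_⟩
  have hdist : dist z (z + e) < δ := by rwa [dist_self_add_right]
  exact (abs_sub_lt_iff.1 (h hdist hz)).2

variable {E : Type*} [NormedAddCommGroup E] [InnerProductSpace ℝ E]
  {u : E → ℝ} {R V m : ℝ} {a e : E}

theorem isLittleO_rpow_norm_sub_of_continuousAt {f : E → ℝ}
    (hn : 2 < Module.finrank ℝ E) (hf : ContinuousAt f a) :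
    f =o[𝓝[≠] a] fun x ↦ ‖x - a‖ ^ (2 - Module.finrank ℝ E : ℝ) := by
  have hpole : (fun x : E ↦ ‖x‖ ^ (0 : ℝ)) =o[𝓝[≠] (a - a)] fun x ↦
      ‖x‖ ^ (2 - Module.finrank ℝ E : ℝ) := by
    rw [sub_self]
    exact isLittleO_norm_rpow_norm_rpow (sub_neg.2 (mod_cast hn))
  rw [← map_subRight_nhdsNE, isLittleO_map] at hpole
  refine ((hf.tendsto.mono_left nhdsWithin_le_nhds).isBigO_one ℝ).trans_isLittleO ?_
  simpa only [Function.comp_def, Real.rpow_zero] using hpole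

theorem isLittleO_translate_sub (hn : 2 < Module.finrank ℝ E)
    (hu₁ : ContinuousAt u e) (hu₂ : ContinuousAt u (-e))
    (ho : u =o[𝓝[≠] 0] fun x ↦ ‖x‖ ^ (2 - Module.finrank ℝ E : ℝ)) {b : E}
    (hb : b = 0 ∨ b = -e) :
    (fun z ↦ u (z + e) - u z) =o[𝓝[≠] b] fun z ↦ ‖z - b‖ ^ (2 - Module.finrank ℝ E : ℝ) := by
  rcases hb with rfl | rfl
  · refine (isLittleO_rpow_norm_sub_of_continuousAt hn ?_).sub (by simpa only [sub_zero] using ho)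
    exact ContinuousAt.comp (f := (· + e)) (by rwa [zero_add]) (by fun_prop)
  · rw [← neg_add_cancel e, ← map_add_right_nhdsNE, isLittleO_map] at ho
    simp only [sub_neg_eq_add]
    refine ho.sub ?_
    simpa only [sub_neg_eq_add, Function.comp_def] using
      isLittleO_rpow_norm_sub_of_continuousAt hn hu₂

variable [FiniteDimensional ℝ E]

theorem le_add_of_neg_le_laplacian (hn : 2 < Module.finrank ℝ E) {S : Finset E} {f : E → ℝ}
    {C : ℝ} (hC : 0 ≤ C) (hm : 0 ≤ m) (hf : ∀ x ∈ closedBall a R \ S, ContDiffAt ℝ 2 f x)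
    (hΔ : ∀ x ∈ closedBall a R \ S, -C ≤ Δ f x) (hfr : ∀ x ∈ sphere a R \ S, f x ≤ m)
    (hpole : ∀ b ∈ S, f =o[𝓝[≠] b] fun x ↦ ‖x - b‖ ^ (2 - Module.finrank ℝ E : ℝ)) :
    ∀ x ∈ closedBall a R \ S, f x ≤ m + (C + 1) * R ^ 2 := by
  have hn' : (2 : ℝ) < Module.finrank ℝ E := mod_cast hn
  have hq {x : E} : ContDiffAt ℝ 2 (fun y ↦ ‖y - a‖ ^ 2) x := (contDiff_norm_sub_sq a).contDiffAt
  have hCq {x : E} : ContDiffAt ℝ 2 ((C + 1) • fun y ↦ ‖y - a‖ ^ 2) x := hq.const_smul (C + 1)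
  have hint {x : E} (hx : x ∈ interior (closedBall a R) \ S) : x ∈ closedBall a R \ S :=
    ⟨interior_subset hx.1, hx.2⟩
  have hle := le_of_laplacian_pos_of_isLittleO (w := f + (C + 1) • fun y ↦ ‖y - a‖ ^ 2)
    (m := m + (C + 1) * R ^ 2) (by positivity) (isCompact_closedBall a R)
    (fun x hx ↦ ((hf x hx).add hCq).continuousAt.continuousWithinAt)
    (fun x hx ↦ (hf x (hint hx)).add hCq) (fun x hx ↦ ?_) (fun x hx ↦ ?_)
    (fun b hb ↦ (hpole b hb).add ?_)
  · have hnonneg (x : E) : 0 ≤ (C + 1) * ‖x - a‖ ^ 2 := by positivity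
    exact fun x hx ↦ (le_add_of_nonneg_right (hnonneg x)).trans (hle x hx)
  · rw [(hf x (hint hx)).laplacian_add hCq, laplacian_smul _ hq,
      laplacian_norm_sub_sq, smul_eq_mul]
    have := hΔ x (hint hx)
    nlinarith
  · have hxR := frontier_closedBall_subset_sphere hx.1
    have := hfr x ⟨hxR, hx.2⟩
    simpa only [Pi.add_apply, Pi.smul_apply, smul_eq_mul, mem_sphere_iff_norm.1 hxR,
      add_le_add_iff_right]
  · exact isLittleO_rpow_norm_sub_of_continuousAt hn hCq.continuousAt

theorem sub_le_of_abs_laplacian_le (hn : 2 < Module.finrank ℝ E)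
    (hu : ∀ x ∈ closedBall 0 (2 * R) \ {0}, ContDiffAt ℝ 2 u x)
    (hΔ : ∀ x ∈ closedBall 0 (2 * R) \ {0}, |Δ u x| ≤ V)
    (ho : u =o[𝓝[≠] 0] fun x ↦ ‖x‖ ^ (2 - Module.finrank ℝ E : ℝ)) (hm : 0 ≤ m)
    (he₀ : e ≠ 0) (he : ‖e‖ ≤ R) (hosc : ∀ z ∈ sphere 0 R, u (z + e) - u z ≤ m)
    {x : E} (hx : x ∈ closedBall 0 R) (hx₀ : x ≠ 0) (hxe : x + e ≠ 0) :
    u (x + e) - u x ≤ m + (2 * V + 1) * R ^ 2 := by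
  classical
  have hmem {z : E} (hz : z ∈ closedBall (0 : E) R \ ({0, -e} : Finset E)) :
      z ∈ closedBall 0 (2 * R) \ {0} ∧ z + e ∈ closedBall 0 (2 * R) \ {0} := by
    obtain ⟨hzR, hzS⟩ := hz
    simp only [Finset.coe_insert, Finset.coe_singleton, Set.mem_insert_iff, Set.mem_singleton_iff,
      not_or, ← add_eq_zero_iff_eq_neg] at hzS
    rw [mem_closedBall_zero_iff] at hzR
    refine ⟨⟨mem_closedBall_zero_iff.2 ?_, hzS.1⟩, mem_closedBall_zero_iff.2 ?_, hzS.2⟩ <;>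
      linarith [norm_add_le z e, norm_nonneg z]
  have hpole : e ∈ closedBall 0 (2 * R) \ {0} ∧ -e ∈ closedBall 0 (2 * R) \ {0} := by
    have : ‖e‖ ≤ 2 * R := by linarith [norm_nonneg e]
    simp [this, he₀]
  have htrans {z : E} (hz : z ∈ closedBall (0 : E) R \ ({0, -e} : Finset E)) :
      ContDiffAt ℝ 2 (fun y ↦ u (y + e)) z :=
    (hu _ (hmem hz).2).comp z (contDiffAt_id.add contDiffAt_const)
  refine le_add_of_neg_le_laplacian (a := 0) (S := {0, -e}) (f := fun z ↦ u (z + e) - u z)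
    (C := 2 * V) hn (by linarith [(abs_nonneg _).trans (hΔ e hpole.1)]) hm
    (fun z hz ↦ (htrans hz).sub (hu _ (hmem hz).1)) (fun z hz ↦ ?_) (fun z hz ↦ hosc z hz.1)
    (fun b hb ↦ isLittleO_translate_sub hn (hu _ hpole.1).continuousAt
      (hu _ hpole.2).continuousAt ho (by simpa using hb)) x ⟨hx, ?_⟩
  · change _ ≤ Δ ((fun y ↦ u (y + e)) - u) z
    rw [(htrans hz).laplacian_sub (hu _ (hmem hz).1), laplacian_comp_add_right]
    linarith [abs_le.1 (hΔ _ (hmem hz).1), abs_le.1 (hΔ _ (hmem hz).2)]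
  · simp [hx₀, mt add_eq_zero_iff_eq_neg.2 hxe]

theorem exists_forall_mem_ball_sub_lt (hn : 2 < Module.finrank ℝ E)
    (hu : ∀ᶠ x in 𝓝[≠] 0, ContDiffAt ℝ 2 u x) (hΔ : Δ u =O[𝓝[≠] 0] fun _ ↦ (1 : ℝ))
    (ho : u =o[𝓝[≠] 0] fun x ↦ ‖x‖ ^ (2 - Module.finrank ℝ E : ℝ)) {ε : ℝ} (hε : 0 < ε) :
    ∃ ρ > 0, ∀ x ∈ ball 0 ρ \ {0}, ∀ y ∈ ball 0 ρ \ {0}, u y - u x < ε := by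
  obtain ⟨V, hV⟩ := hΔ.bound
  simp only [Real.norm_eq_abs, abs_one, mul_one] at hV
  obtain ⟨r, hr, hball⟩ := exists_forall_mem_closedBall_diff_singleton (hu.and hV)
  have hsmall : ∀ᶠ R in 𝓝[>] (0 : ℝ), (2 * V + 1) * R ^ 2 < ε / 2 :=
    ((Continuous.tendsto' (by fun_prop) 0 0 (by simp)).mono_left
      nhdsWithin_le_nhds).eventually_lt_const (half_pos hε)
  obtain ⟨R, hRε, hR, hRr⟩ := (hsmall.and (Ioo_mem_nhdsGT (half_pos hr))).exists
  have hsub {z : E} (hz : z ∈ closedBall 0 (2 * R) \ {0}) : ContDiffAt ℝ 2 u z ∧ |Δ u z| ≤ V :=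
    hball z ⟨closedBall_subset_closedBall (by linarith) hz.1, hz.2⟩
  obtain ⟨δ, hδ, hosc⟩ := exists_forall_translate_sub_lt_of_isCompact (u := u)
    (isCompact_sphere (0 : E) R) (fun z hz ↦ (hsub ⟨mem_closedBall.2
      (by linarith [mem_sphere.1 hz]), ne_of_mem_sphere hz hR.ne'⟩).1.continuousAt) (half_pos hε)
  refine ⟨min δ R / 2, by positivity, fun x hx y hy ↦ ?_⟩
  rcases eq_or_ne x y with rfl | hxy
  · rwa [sub_self]
  have he : ‖y - x‖ < min δ R := by
    linarith [norm_sub_le y x, mem_ball_zero_iff.1 hx.1, mem_ball_zero_iff.1 hy.1]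
  have hxR : x ∈ closedBall 0 R :=
    ball_subset_closedBall (ball_subset_ball (by linarith [min_le_right δ R]) hx.1)
  have hle := sub_le_of_abs_laplacian_le (V := V) (R := R) (e := y - x) hn
    (fun z hz ↦ (hsub hz).1) (fun z hz ↦ (hsub hz).2) ho (half_pos hε).le (sub_ne_zero.2 hxy.symm)
    (he.le.trans (min_le_right _ _))
    (fun z hz ↦ (hosc z hz _ (he.trans_le (min_le_left _ _))).le) hxR hx.2
    (by rw [add_sub_cancel]; exact hy.2)
  rw [add_sub_cancel] at hle
  linarith

theorem exists_tendsto_of_laplacian_isBigO_one (hn : 2 < Module.finrank ℝ E)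
    (hu : ∀ᶠ x in 𝓝[≠] 0, ContDiffAt ℝ 2 u x) (hΔ : Δ u =O[𝓝[≠] 0] fun _ ↦ (1 : ℝ))
    (ho : u =o[𝓝[≠] 0] fun x ↦ ‖x‖ ^ (2 - Module.finrank ℝ E : ℝ)) :
    ∃ l, Tendsto u (𝓝[≠] 0) (𝓝 l) := by
  have : Nontrivial E := Module.nontrivial_of_finrank_pos (R := ℝ) (by omega)
  rw [← cauchy_map_iff_exists_tendsto, Metric.cauchy_iff]
  refine ⟨inferInstance, fun ε hε ↦ ?_⟩
  obtain ⟨ρ, hρ, hlt⟩ := exists_forall_mem_ball_sub_lt hn hu hΔ ho hε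
  refine ⟨u '' (ball 0 ρ \ {0}), image_mem_map ?_, ?_⟩
  · exact inter_mem (mem_nhdsWithin_of_mem_nhds (ball_mem_nhds _ hρ)) self_mem_nhdsWithin
  · rintro _ ⟨x, hx, rfl⟩ _ ⟨y, hy, rfl⟩
    exact abs_sub_lt_iff.2 ⟨hlt y hy x hx, hlt x hx y hy⟩

end RemovableSingularity

section Bootstrap

theorem exists_pos_forall_add_sub_four_le_mul {d s : ℝ} (hd : 0 < d) (hs : s * d < d + 4) :
    ∃ δ > 0, ∀ γ ∈ Set.Icc (-d) 0, γ + δ - 4 ≤ s * γ := by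
  refine ⟨min 4 (d + 4 - s * d), by simp [hs], fun γ hγ ↦ ?_⟩
  have h₁ := mul_nonneg (neg_nonneg.2 hγ.2) (sub_nonneg.2 (min_le_right 4 (d + 4 - s * d)))
  have h₂ := mul_nonneg (neg_le_iff_add_nonneg.1 hγ.1)
    (sub_nonneg.2 (min_le_left 4 (d + 4 - s * d)))
  nlinarith

variable {ι E : Type*} [Fintype ι] [NormedAddCommGroup E] [InnerProductSpace ℝ E]
  [FiniteDimensional ℝ E] {u : E → EuclideanSpace ℝ ι} {C s q γ : ℝ}

theorem isBigO_of_forall_apply {α : Type*} {l : Filter α} {f : α → EuclideanSpace ℝ ι} {g : α → ℝ}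
    (h : ∀ i, (fun x ↦ f x i) =O[l] g) : f =O[l] g :=
  ((EuclideanSpace.equiv ι ℝ).isBigO_comp_rev f l).trans (isBigO_pi.2 h)

theorem exists_bilaplacian_le_mul_rpow {v : E → ℝ} (hs : 0 ≤ s) (hq : q ≤ s * γ)
    (hv : ∀ᶠ x in 𝓝[≠] 0, Δ (Δ v) x ≤ C * ‖u x‖ ^ s) (hu : u =O[𝓝[≠] 0] fun x ↦ ‖x‖ ^ γ) :
    ∃ M ≥ 0, ∀ᶠ x in 𝓝[≠] 0, Δ (Δ v) x ≤ M * ‖x‖ ^ q := by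
  have hO : (fun x ↦ C * ‖u x‖ ^ s) =O[𝓝[≠] 0] fun x ↦ ‖x‖ ^ q := by
    have h : (fun x ↦ ‖u x‖ ^ s) =O[𝓝[≠] 0] fun x ↦ (‖x‖ ^ γ) ^ s :=
      hu.norm_left.rpow hs (.of_forall fun x ↦ by positivity)
    simp only [← Real.rpow_mul (norm_nonneg _), mul_comm γ] at h
    exact (h.trans (isBigO_norm_rpow_norm_rpow hq)).const_mul_left C
  obtain ⟨M, hM, hbound⟩ := hO.exists_nonneg
  refine ⟨M, hM, ?_⟩
  filter_upwards [hv, hbound.bound] with x hx hxM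
  rw [Real.norm_of_nonneg (by positivity : 0 ≤ ‖x‖ ^ q)] at hxM
  exact hx.trans ((le_abs_self _).trans hxM)

theorem isBigO_rpow_of_bilaplacian_le (hu : ∀ i, IsNonnegSuperharmonicNearZero fun x ↦ u x i)
    (hΔΔ : ∀ i, ∀ᶠ x in 𝓝[≠] 0, Δ (Δ fun y ↦ u y i) x ≤ C * ‖u x‖ ^ s)
    (ho : u =o[𝓝[≠] 0] fun x ↦ ‖x‖ ^ (4 - Module.finrank ℝ E : ℝ))
    (hn : 4 < Module.finrank ℝ E) (hs₀ : 0 ≤ s)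
    (hs : s < Module.finrank ℝ E / (Module.finrank ℝ E - 4))
    (hγn : 4 - Module.finrank ℝ E < γ) (hγ : γ < 0) :
    u =O[𝓝[≠] 0] fun x ↦ ‖x‖ ^ γ := by
  have hd : (0 : ℝ) < Module.finrank ℝ E - 4 := sub_pos.2 (mod_cast hn)
  obtain ⟨δ, hδ, hgain⟩ := exists_pos_forall_add_sub_four_le_mul hd
    (by rwa [sub_add_cancel, ← lt_div_iff₀ hd])
  let exponent (k : ℕ) : ℝ := min (4 - Module.finrank ℝ E + k * δ) γ
  have hstep (k : ℕ) : u =O[𝓝[≠] 0] fun x ↦ ‖x‖ ^ exponent k := by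
    induction k with
    | zero =>
      refine ho.isBigO.trans (isBigO_norm_rpow_norm_rpow ?_)
      simp [exponent]
    | succ k ih =>
      have hek : exponent (k + 1) ≤ exponent k + δ := by
        simp only [exponent, Nat.cast_add_one, ← min_add_add_right]
        exact min_le_min (by linarith) (by linarith)
      have hmem : exponent k ∈ Set.Icc (-(Module.finrank ℝ E - 4 : ℝ)) 0 :=
        ⟨le_min (by rw [neg_sub]; exact le_add_of_nonneg_right (by positivity)) (by linarith),
          (min_le_right _ _).trans hγ.le⟩
      refine isBigO_of_forall_apply fun i ↦ ?_
      obtain ⟨M, hM, hle⟩ := exists_bilaplacian_le_mul_rpow (q := exponent (k + 1) - 4) hs₀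
        (by linarith [hgain _ hmem]) (hΔΔ i) ih
      refine (hu i).isBigO hM (lt_min (lt_add_of_pos_right _ (by positivity)) hγn)
        (min_lt_of_right_lt hγ) hle
        ((isBigO_of_le _ fun x ↦ PiLp.norm_apply_le (u x) i).trans_isLittleO ho)
  obtain ⟨k, hk⟩ := exists_nat_ge ((γ + Module.finrank ℝ E - 4) / δ)
  rw [div_le_iff₀ hδ] at hk
  have hek : exponent k = γ := min_eq_right (by linarith)
  rw [← hek]
  exact hstep k

theorem exists_tendsto_of_bilaplacian_le (hu : ∀ i, IsNonnegSuperharmonicNearZero fun x ↦ u x i)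
    (hΔΔ : ∀ i, ∀ᶠ x in 𝓝[≠] 0, Δ (Δ fun y ↦ u y i) x ≤ C * ‖u x‖ ^ s)
    (ho : u =o[𝓝[≠] 0] fun x ↦ ‖x‖ ^ (4 - Module.finrank ℝ E : ℝ))
    (hn : 4 < Module.finrank ℝ E) (hs₀ : 0 ≤ s)
    (hs : s < Module.finrank ℝ E / (Module.finrank ℝ E - 4)) :
    ∃ l, Tendsto u (𝓝[≠] 0) (𝓝 l) := by
  have hn' : (5 : ℝ) ≤ Module.finrank ℝ E := mod_cast hn
  have hγ : -1 < -1 / (s + 2) ∧ -1 / (s + 2) < 0 ∧ -1 < s * (-1 / (s + 2)) := by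
    refine ⟨?_, div_neg_of_neg_of_pos (by norm_num) (by linarith), ?_⟩
    · rw [lt_div_iff₀ (by linarith)]
      linarith
    · rw [mul_div_assoc', lt_div_iff₀ (by linarith)]
      linarith
  have hO := isBigO_rpow_of_bilaplacian_le hu hΔΔ ho hn hs₀ hs (γ := -1 / (s + 2))
    (by linarith) hγ.2.1
  have hlim (i : ι) : ∃ l, Tendsto (fun x ↦ u x i) (𝓝[≠] 0) (𝓝 l) := by
    have hoi : (fun x ↦ u x i) =o[𝓝[≠] 0] fun x ↦ ‖x‖ ^ (4 - Module.finrank ℝ E : ℝ) :=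
      (isBigO_of_le _ fun x ↦ PiLp.norm_apply_le (u x) i).trans_isLittleO ho
    obtain ⟨M, hM, hle⟩ := exists_bilaplacian_le_mul_rpow hs₀ hγ.2.2.le (hΔΔ i) hO
    have hΔ := (hu i).laplacian_isBigO (γ := 1) hM (by linarith) one_ne_zero
      (by convert hle using 5; norm_num) hoi
    refine exists_tendsto_of_laplacian_isBigO_one (by omega)
      ((hu i).contDiffAt.mono fun x hx ↦ hx.of_le (by norm_num)) ?_
      (hoi.trans_isBigO (isBigO_norm_rpow_norm_rpow (by linarith)))
    simpa only [min_eq_right zero_le_one, Real.rpow_zero] using hΔ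
  choose l hl using hlim
  exact ⟨WithLp.toLp 2 l, ((PiLp.continuous_toLp 2 _).tendsto l).comp (tendsto_pi_nhds.2 hl)⟩

end Bootstrap

section EuclideanSpace

variable {n p : ℕ} {u : EuclideanSpace ℝ (Fin n) → ℝ} {x : EuclideanSpace ℝ (Fin n)}

theorem lap_eq_laplacian (hu : ContDiffAt ℝ 2 u x) : lap u x = Δ u x := by
  rw [laplacian_eq_sum_fderiv_fderiv (EuclideanSpace.basisFun (Fin n) ℝ)]
  refine Finset.sum_congr rfl fun i _ ↦ ?_
  rw [fderiv_clm_apply (differentiableAt_fderiv hu) (differentiableAt_const _)]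
  simp

theorem bilap_eq_laplacian_laplacian (hu : ContDiffAt ℝ 4 u x) : bilap u x = Δ (Δ u) x := by
  have heq : lap u =ᶠ[𝓝 x] Δ u := by
    filter_upwards [hu.eventually (by simp)] with y hy
    exact lap_eq_laplacian (hy.of_le (by norm_num))
  have hΔu : ContDiffAt ℝ 2 (Δ u) x := contDiffAt_laplacian hu (by norm_num)
  rw [bilap, lap_eq_laplacian (hΔu.congr_of_eventuallyEq heq),
    (laplacian_congr_nhds heq).self_of_nhds]

theorem isLittleO_norm_rpow_neg_of_tendsto {V F : Type*} [NormedAddCommGroup V]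
    [SeminormedAddCommGroup F] {f : V → F} {Ω : Set V} (hΩ : Ω ∈ 𝓝 0) {t : ℝ}
    (h : Tendsto (fun x ↦ ‖x‖ ^ t * ‖f x‖) (𝓝[Ω \ {0}] 0) (𝓝 0)) :
    f =o[𝓝[≠] 0] fun x ↦ ‖x‖ ^ (-t) := by
  rw [Set.sdiff_eq, nhdsWithin_inter_of_mem (mem_nhdsWithin_of_mem_nhds hΩ)] at h
  refine isLittleO_iff.2 fun c hc ↦ ?_
  filter_upwards [h.eventually_le_const hc, self_mem_nhdsWithin] with x hx hx₀
  have hpos : 0 < ‖x‖ ^ t := Real.rpow_pos_of_pos (norm_pos_iff.2 hx₀) t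
  rwa [Real.norm_of_nonneg (by positivity : 0 ≤ ‖x‖ ^ (-t)), Real.rpow_neg (norm_nonneg x),
    ← div_eq_mul_inv, le_div_iff₀' hpos]

theorem vnorm_eq_norm_toLp (U : Fin p → EuclideanSpace ℝ (Fin n) → ℝ)
    (x : EuclideanSpace ℝ (Fin n)) : vnorm U x = ‖WithLp.toLp 2 fun i ↦ U i x‖ := by
  simp only [vnorm, EuclideanSpace.norm_eq, Real.norm_eq_abs, sq_abs]

theorem rpow_sub_one_mul_le_rpow_norm {ι : Type*} [Fintype ι] (v : EuclideanSpace ℝ ι) (i : ι)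
    {s : ℝ} (hs : s ≠ 0) :
    ‖v‖ ^ (s - 1) * v i ≤ ‖v‖ ^ s :=
  calc ‖v‖ ^ (s - 1) * v i ≤ ‖v‖ ^ (s - 1) * ‖v‖ := by
        gcongr
        exact (Real.le_norm_self _).trans (PiLp.norm_apply_le v i)
    _ = ‖v‖ ^ s := by
      rw [← Real.rpow_add_one' (norm_nonneg v) (by simpa using hs), sub_add_cancel]

end EuclideanSpace

theorem statement17_general {E ι : Type*} [NormedAddCommGroup E] [InnerProductSpace ℝ E]
    [FiniteDimensional ℝ E] [Fintype ι] (hn : 4 < Module.finrank ℝ E) {s C : ℝ} (hs₀ : 0 ≤ s)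
    (hs : s < Module.finrank ℝ E / (Module.finrank ℝ E - 4)) {Ω : Set E} (hΩ : IsOpen Ω)
    (hΩ₀ : 0 ∈ Ω) {U : E → EuclideanSpace ℝ ι} (hU : ContDiffOn ℝ 4 U (Ω \ {0}))
    (hnonneg : ∀ i, ∀ x ∈ Ω \ {0}, 0 ≤ U x i) (hΔ : ∀ i, ∀ x ∈ Ω \ {0}, Δ (fun y ↦ U y i) x ≤ 0)
    (hΔΔ : ∀ i, ∀ x ∈ Ω \ {0}, Δ (Δ fun y ↦ U y i) x ≤ C * ‖U x‖ ^ s)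
    (ho : U =o[𝓝[≠] 0] fun x ↦ ‖x‖ ^ (4 - Module.finrank ℝ E : ℝ)) :
    ∃ g, ContinuousOn g Ω ∧ Set.EqOn g U (Ω \ {0}) := by
  classical
  have hΩ' : ∀ᶠ x in 𝓝[≠] 0, x ∈ Ω \ {0} :=
    inter_mem (mem_nhdsWithin_of_mem_nhds (hΩ.mem_nhds hΩ₀)) self_mem_nhdsWithin
  have hsuper (i : ι) : IsNonnegSuperharmonicNearZero fun x ↦ U x i :=
    { contDiffAt := hΩ'.mono fun x hx ↦
        contDiffAt_euclidean.1 (hU.contDiffAt ((hΩ.sdiff isClosed_singleton).mem_nhds hx)) i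
      nonneg := hΩ'.mono (hnonneg i)
      laplacian_nonpos := hΩ'.mono (hΔ i) }
  obtain ⟨l, hl⟩ := exists_tendsto_of_bilaplacian_le hsuper (fun i ↦ hΩ'.mono (hΔΔ i)) ho hn hs₀ hs
  refine ⟨Function.update U 0 l, continuousOn_update_iff.2 ⟨hU.continuousOn, fun _ ↦
    hl.mono_left (nhdsWithin_mono 0 fun _ hx ↦ hx.2)⟩, fun x hx ↦ Function.update_of_ne hx.2 l U⟩

/-- removability of the singularity in the Serrin–Lions range
`1 < s < n/(n-4)` when `|U(x)| = o(|x|^{4-n})` as `x → 0`. -/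
theorem statement17 (n p : ℕ) (hn : 5 ≤ n) (hp : 1 ≤ p) (s : ℝ)
    (hs1 : 1 < s) (hs2 : s < (n : ℝ) / ((n : ℝ) - 4))
    (U : Fin p → EuclideanSpace ℝ (Fin n) → ℝ)
    (hnonneg : ∀ i, ∀ x ∈ Metric.ball (0 : EuclideanSpace ℝ (Fin n)) 1 \ {0}, 0 ≤ U i x)
    (hC4 : ∀ i, ContDiffOn ℝ 4 (U i)
      (Metric.ball (0 : EuclideanSpace ℝ (Fin n)) 1 \ {0}))
    (hsuper : ∀ i, ∀ x ∈ Metric.ball (0 : EuclideanSpace ℝ (Fin n)) 1 \ {0},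
      0 < -lap (U i) x)
    (hpde : ∀ i, ∀ x ∈ Metric.ball (0 : EuclideanSpace ℝ (Fin n)) 1 \ {0},
      bilap (U i) x = (vnorm U x) ^ (s - 1) * U i x)
    (hlittleo : Tendsto
      (fun x : EuclideanSpace ℝ (Fin n) => ‖x‖ ^ ((n : ℝ) - 4) * vnorm U x)
      (𝓝[Metric.ball (0 : EuclideanSpace ℝ (Fin n)) 1 \ {0}] 0) (𝓝 0)) :
    ∀ i, ∃ g : EuclideanSpace ℝ (Fin n) → ℝ,
      ContinuousOn g (Metric.ball (0 : EuclideanSpace ℝ (Fin n)) 1) ∧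
      ∀ x ∈ Metric.ball (0 : EuclideanSpace ℝ (Fin n)) 1 \ {0}, g x = U i x := by
  have hC4At (i : Fin p) {x} (hx : x ∈ ball 0 1 \ {0}) : ContDiffAt ℝ 4 (U i) x :=
    (hC4 i).contDiffAt ((isOpen_ball.sdiff isClosed_singleton).mem_nhds hx)
  have hΔ (i : Fin p) : ∀ x ∈ ball 0 1 \ {0}, Δ (U i) x ≤ 0 := fun x hx ↦ by
    rw [← lap_eq_laplacian ((hC4At i hx).of_le (by norm_num))]
    exact (neg_pos.1 (hsuper i x hx)).le
  have hΔΔ (i : Fin p) : ∀ x ∈ ball 0 1 \ {0},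
      Δ (Δ (U i)) x ≤ 1 * ‖WithLp.toLp 2 fun i ↦ U i x‖ ^ s := fun x hx ↦ by
    rw [one_mul, ← bilap_eq_laplacian_laplacian (hC4At i hx), hpde i x hx, vnorm_eq_norm_toLp]
    exact rpow_sub_one_mul_le_rpow_norm _ i (by linarith)
  have ho : (fun x ↦ WithLp.toLp 2 fun i ↦ U i x) =o[𝓝[≠] 0] fun x ↦ ‖x‖ ^ (4 - n : ℝ) := by
    simp only [vnorm_eq_norm_toLp] at hlittleo
    simpa only [neg_sub] using
      isLittleO_norm_rpow_neg_of_tendsto (ball_mem_nhds 0 one_pos) hlittleo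
  have hfin : Module.finrank ℝ (EuclideanSpace ℝ (Fin n)) = n := finrank_euclideanSpace_fin
  obtain ⟨g, hg, hgU⟩ := statement17_general
    (U := fun x ↦ WithLp.toLp 2 fun i ↦ U i x) (by rw [hfin]; omega) (by linarith)
    (by rwa [hfin]) isOpen_ball (mem_ball_self one_pos) (contDiffOn_euclidean.2 hC4) hnonneg hΔ hΔΔ
    (by rwa [hfin])
  exact fun i ↦ ⟨fun x ↦ g x i, by fun_prop, fun x hx ↦ congrArg (fun v ↦ v i) (hgU hx)⟩
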